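/- Every finite extensive-form game with perfect recall possesses a semi-sequential equilibrium: there exist a behavioral strategy profile β* and a belief system μ* forming a semi-sequential equilibrium. -/

import Mathlib

open scoped Classical

noncomputable section

/-- A finite extensive-form game.  Actions are labelled by natural numbers drawn from the
finite pool `actFinset`; a history is the list of actions taken so far; players are `Fin n`
and `P h = none` means that the chance player moves after `h`.  The information sets of
player `i` are `Info i j` for `j < m i`, and `infoIdx h` is the index of the information
set containing a nonterminal history `h` at which some player moves.  Payoffs `u i h` are
relevant on terminal histories. -/
structure EFG where
  n : ℕ
  actFinset : Finset ℕ
  H : Finset (List ℕ)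
  P : List ℕ → Option (Fin n)
  fc : List ℕ → ℕ → ℝ
  m : Fin n → ℕ
  Info : Fin n → ℕ → Finset (List ℕ)
  infoIdx : List ℕ → ℕ
  u : Fin n → List ℕ → ℝ
  empty_mem : ([] : List ℕ) ∈ H
  prefixClosed : ∀ h ∈ H, ∀ h' : List ℕ, h' <+: h → h' ∈ H
  act_mem : ∀ (h : List ℕ) (a : ℕ), h ++ [a] ∈ H → a ∈ actFinset
  fc_nonneg : ∀ h a, 0 ≤ fc h a
  fc_sum : ∀ h ∈ H, P h = none → (∃ a, h ++ [a] ∈ H) →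
    ∑ a ∈ actFinset.filter (fun a => h ++ [a] ∈ H), fc h a = 1
  info_spec : ∀ (i : Fin n) (j : ℕ) (h : List ℕ), j < m i →
    (h ∈ Info i j ↔ h ∈ H ∧ P h = some i ∧ (∃ a, h ++ [a] ∈ H) ∧ infoIdx h = j)
  infoIdx_lt : ∀ (i : Fin n), ∀ h ∈ H, P h = some i → (∃ a, h ++ [a] ∈ H) → infoIdx h < m i
  info_nonempty : ∀ (i : Fin n) (j : ℕ), j < m i → (Info i j).Nonempty
  info_actions : ∀ (i : Fin n) (j : ℕ), j < m i → ∀ h ∈ Info i j, ∀ h' ∈ Info i j,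
    ∀ a : ℕ, (h ++ [a] ∈ H ↔ h' ++ [a] ∈ H)
  act_unique : ∀ (h h' : List ℕ) (a : ℕ), h ∈ H → h' ∈ H → h ++ [a] ∈ H → h' ++ [a] ∈ H →
    P h = P h' ∧ infoIdx h = infoIdx h'

namespace EFG

/-- Behavioral strategy profiles (player, information-set index, action ↦ probability). -/
abbrev Profile (G : EFG) : Type := Fin G.n → ℕ → ℕ → ℝ

/-- Belief systems (player, information-set index, history ↦ probability). -/
abbrev Belief (G : EFG) : Type := Fin G.n → ℕ → List ℕ → ℝ

variable (G : EFG)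

/-- The set `Z` of terminal histories. -/
def Zset : Finset (List ℕ) := G.H.filter fun h => ∀ a : ℕ, h ++ [a] ∉ G.H

/-- The set `A(h)` of actions available after a history. -/
def A (h : List ℕ) : Finset ℕ := G.actFinset.filter fun a => h ++ [a] ∈ G.H

/-- The common action set `A(I_i^j)` of an information set. -/
def infoA (i : Fin G.n) (j : ℕ) : Finset ℕ := (G.Info i j).sup fun h => G.A h

/-- A behavioral strategy of player `i`: a probability distribution on `A(I_i^j)` for
each information set `I_i^j`. -/
def IsBehStrategy (i : Fin G.n) (b : ℕ → ℕ → ℝ) : Prop :=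
  ∀ j < G.m i, (∀ a ∈ G.infoA i j, 0 ≤ b j a) ∧ ∑ a ∈ G.infoA i j, b j a = 1

/-- A behavioral strategy profile. -/
def IsBehProfile (β : G.Profile) : Prop := ∀ i : Fin G.n, G.IsBehStrategy i (β i)

/-- The probability of action `a` at history `h`: the chance distribution if the chance
player moves, and the mover's behavioral strategy otherwise. -/
def moveProb (β : G.Profile) (h : List ℕ) (a : ℕ) : ℝ :=
  (G.P h).elim (G.fc h a) fun i => β i (G.infoIdx h) a

/-- Player `i`'s record `X_i` of the information sets he encounters along a history and the
actions he takes at them, accumulated starting from the prefix `pre`. -/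
def recordFrom (i : Fin G.n) : List ℕ → List ℕ → List (ℕ × ℕ)
  | _, [] => []
  | pre, b :: rest =>
    (if G.P pre = some i then [(G.infoIdx pre, b)] else []) ++ recordFrom i (pre ++ [b]) rest

/-- Perfect recall. -/
def PerfectRecall : Prop :=
  ∀ (i : Fin G.n) (j : ℕ), j < G.m i →
    ∀ h ∈ G.Info i j, ∀ h' ∈ G.Info i j, G.recordFrom i [] h = G.recordFrom i [] h'

/-- Product of the move probabilities along `rest`, continuing from the prefix `pre`. -/
def prodAlong (β : G.Profile) : List ℕ → List ℕ → ℝ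
  | _, [] => 1
  | pre, b :: rest => G.moveProb β pre b * prodAlong β (pre ++ [b]) rest

/-- `ω(h|β)`: the probability that the moves along `h` are played under `β`. -/
def omega (β : G.Profile) (h : List ℕ) : ℝ := G.prodAlong β [] h

/-- `ω(I_i^j|β)`. -/
def omegaInfo (i : Fin G.n) (j : ℕ) (β : G.Profile) : ℝ := ∑ h ∈ G.Info i j, G.omega β h

/-- Product of the move probabilities along `rest` from `pre`, disregarding player `i`'s
own moves. -/
def prodAlongNot (i : Fin G.n) (β : G.Profile) : List ℕ → List ℕ → ℝ
  | _, [] => 1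
  | pre, b :: rest =>
    (if G.P pre = some i then 1 else G.moveProb β pre b) * prodAlongNot i β (pre ++ [b]) rest

/-- `S^i(h|β)`: probability of the moves along `h`, disregarding player `i`'s own moves. -/
def Sh (i : Fin G.n) (β : G.Profile) (h : List ℕ) : ℝ := G.prodAlongNot i β [] h

/-- `S^i(I_i^j|β)`. -/
def SInfo (i : Fin G.n) (j : ℕ) (β : G.Profile) : ℝ := ∑ h ∈ G.Info i j, G.Sh i β h

/-- Product of the move probabilities along `rest` from `pre`, with the factor at prefixes
lying in `I_i^j` omitted. -/
def prodAlongSkip (i : Fin G.n) (j : ℕ) (β : G.Profile) : List ℕ → List ℕ → ℝ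
  | _, [] => 1
  | pre, b :: rest =>
    (if pre ∈ G.Info i j then 1 else G.moveProb β pre b) * prodAlongSkip i j β (pre ++ [b]) rest

/-- `q ∈ M(a, I_i^j)`: `I_i^q` is a first information set of player `i` after action `a`
(every history in `I_i^q` contains `a`, with no later action of `a` lying in any action set
of player `i`). -/
def FirstAfter (i : Fin G.n) (a : ℕ) (q : ℕ) : Prop :=
  q < G.m i ∧ ∀ h ∈ G.Info i q, ∃ l₁ l₂ : List ℕ,
    h = l₁ ++ a :: l₂ ∧ ∀ b ∈ l₂, ∀ p < G.m i, b ∉ G.infoA i p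

/-- `q ∈ M(I_i^j) = ∪_{a ∈ A(I_i^j)} M(a, I_i^j)`. -/
def MInfo (i : Fin G.n) (j : ℕ) (q : ℕ) : Prop := ∃ a ∈ G.infoA i j, G.FirstAfter i a q

/-- `q ∈ Λ(a, I_i^j)`: every history in `I_i^q` contains the action `a`. -/
def LambdaSet (i : Fin G.n) (a : ℕ) (q : ℕ) : Prop :=
  q < G.m i ∧ ∀ h ∈ G.Info i q, ∃ l₁ l₂ : List ℕ, h = l₁ ++ a :: l₂

/-- `ϱ^i_{I_i^j}(β, β̃)`: replace player `i`'s component of `β` by that of `β̃` at every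
information set `I_i^q` such that some history in `I_i^q` contains an action of `A(I_i^j)`. -/
def rho (i : Fin G.n) (j : ℕ) (β βt : G.Profile) : G.Profile := fun p q =>
  if p = i ∧ ∃ h ∈ G.Info i q, ∃ b ∈ h, b ∈ G.infoA i j then βt i q else β p q

/-- A belief system: a probability distribution on each information set. -/
def IsBelief (μ : G.Belief) : Prop :=
  ∀ (i : Fin G.n) (j : ℕ), j < G.m i →
    (∀ h ∈ G.Info i j, 0 ≤ μ i j h) ∧ ∑ h ∈ G.Info i j, μ i j h = 1

/-- A self-independent belief system for `β`:
`S^i(I_i^j|β) · μ^i_{I_i^j}(h) = S^i(h|β)`. -/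
def SelfIndep (β : G.Profile) (μ : G.Belief) : Prop :=
  ∀ (i : Fin G.n) (j : ℕ), j < G.m i → ∀ h ∈ G.Info i j,
    G.SInfo i j β * μ i j h = G.Sh i β h

/-- Auxiliary for `ν`: scan `rest` from `pre` for the subhistory lying in `I_i^j`, then
weight by the belief and multiply the move probabilities of the remaining moves (the move
taken at the subhistory itself being skipped). -/
def nuAux (i : Fin G.n) (j : ℕ) (β : G.Profile) (w : List ℕ → ℝ) : List ℕ → List ℕ → ℝ
  | _, [] => 0
  | pre, b :: rest =>
    if pre ∈ G.Info i j then w pre * G.prodAlong β (pre ++ [b]) rest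
    else nuAux i j β w (pre ++ [b]) rest

/-- `ν^i_{I_i^j}(h | a, β^{-I_i^j}, μ)` (it does not involve the component of `β` at
`I_i^j`). -/
def nu (i : Fin G.n) (j : ℕ) (β : G.Profile) (μ : G.Belief) (h : List ℕ) : ℝ :=
  G.nuAux i j β (μ i j) [] h

/-- `u^i((a, β^{-I_i^j}) ∧ I_i^j)`. -/
def uWedgeAct (i : Fin G.n) (j : ℕ) (a : ℕ) (β : G.Profile) : ℝ :=
  ∑ h ∈ G.Zset.filter (fun h => a ∈ h), G.u i h * G.prodAlongSkip i j β [] h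

/-- `u^i(β ∧ I_i^j)`. -/
def uWedge (i : Fin G.n) (j : ℕ) (β : G.Profile) : ℝ :=
  ∑ h ∈ G.Zset.filter (fun h => ∃ b ∈ h, b ∈ G.infoA i j), G.u i h * G.omega β h

/-- The conditional expected payoff `u^i(a, β^{-I_i^j}, μ | I_i^j)`. -/
def uCond (i : Fin G.n) (j : ℕ) (a : ℕ) (β : G.Profile) (μ : G.Belief) : ℝ :=
  ∑ h ∈ G.Zset.filter (fun h => a ∈ h), G.u i h * G.nu i j β μ h

/-- The expected payoff `u^i(β)`. -/
def uExp (i : Fin G.n) (β : G.Profile) : ℝ := ∑ h ∈ G.Zset, G.u i h * G.omega β h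

/-- The profile obtained from `β` by replacing all of player `i`'s components by `b`. -/
def replace (β : G.Profile) (i : Fin G.n) (b : ℕ → ℕ → ℝ) : G.Profile :=
  fun p => if p = i then b else β p

/-- `β` is a Nash equilibrium in behavioral strategies. -/
def IsNash (β : G.Profile) : Prop :=
  G.IsBehProfile β ∧ ∀ (i : Fin G.n) (b : ℕ → ℕ → ℝ), G.IsBehStrategy i b →
    G.uExp i (G.replace β i b) ≤ G.uExp i β

/-- `(β, β̃, μ)` satisfies the Nash characterization (Definition 2 of the paper). -/
def NashChar (β βt : G.Profile) (μ : G.Belief) : Prop :=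
  (∀ (i : Fin G.n) (j : ℕ), j < G.m i → ∀ a' ∈ G.infoA i j, ∀ a'' ∈ G.infoA i j,
    G.uWedgeAct i j a' (G.rho i j β βt) < G.uWedgeAct i j a'' (G.rho i j β βt) →
    β i j a' = 0) ∧
  (∀ (i : Fin G.n) (j : ℕ), j < G.m i → ∀ a' ∈ G.infoA i j, ∀ a'' ∈ G.infoA i j,
    G.uCond i j a' (G.rho i j β βt) μ < G.uCond i j a'' (G.rho i j β βt) μ →
    βt i j a' = 0) ∧
  G.IsBelief μ ∧ G.SelfIndep β μ

/-- `r` is the root of a subgame: every information set lies entirely inside or entirely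
outside the set of histories extending `r`. -/
def IsSubgameRoot (r : List ℕ) : Prop :=
  r ∈ G.H ∧ ∀ (i : Fin G.n) (j : ℕ), j < G.m i →
    (∀ h ∈ G.Info i j, r <+: h) ∨ ∀ h ∈ G.Info i j, ¬ r <+: h

/-- The depth `g` of the smallest subgame containing `A(I_i^j)` (the length of the longest
subgame root preceding every history of `I_i^j`). -/
def sgDepthInfo (i : Fin G.n) (j : ℕ) : ℕ :=
  (G.H.filter fun r => G.IsSubgameRoot r ∧ ∀ h ∈ G.Info i j, r <+: h).sup List.length

/-- The depth `q(h)` of the smallest subgame containing the last action of `h`. -/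
def sgDepthHist (h : List ℕ) : ℕ :=
  (G.H.filter fun r => G.IsSubgameRoot r ∧ r <+: h.dropLast).sup List.length

/-- `C^i_{I_i^j}(h|β)`: product of move probabilities along `h` within the smallest subgame
containing `A(I_i^j)`. -/
def Ch (i : Fin G.n) (j : ℕ) (β : G.Profile) (h : List ℕ) : ℝ :=
  G.prodAlong β (h.take (G.sgDepthInfo i j)) (h.drop (G.sgDepthInfo i j))

/-- `C^i_{I_i^j}(I_i^j|β)`. -/
def CInfo (i : Fin G.n) (j : ℕ) (β : G.Profile) : ℝ := ∑ h ∈ G.Info i j, G.Ch i j β h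

/-- `u^i((a, β^{-I_i^j}) ⋄ I_i^j)`. -/
def uDiamondAct (i : Fin G.n) (j : ℕ) (a : ℕ) (β : G.Profile) : ℝ :=
  ∑ h ∈ G.Zset.filter (fun h => a ∈ h), G.u i h *
    G.prodAlongSkip i j β (h.take (G.sgDepthInfo i j)) (h.drop (G.sgDepthInfo i j))

/-- `Y^i(h|β)`: like `S^i(h|β)` but within the smallest subgame containing the last action
of `h`. -/
def Yh (i : Fin G.n) (β : G.Profile) (h : List ℕ) : ℝ :=
  G.prodAlongNot i β (h.take (G.sgDepthHist h)) (h.drop (G.sgDepthHist h))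

/-- `Y^i(I_i^j|β)`. -/
def YInfo (i : Fin G.n) (j : ℕ) (β : G.Profile) : ℝ := ∑ h ∈ G.Info i j, G.Yh i β h

/-- The belief condition `Y^i(I_i^j|β) · μ^i_{I_i^j}(h) = Y^i(h|β)`. -/
def YConsistent (β : G.Profile) (μ : G.Belief) : Prop :=
  ∀ (i : Fin G.n) (j : ℕ), j < G.m i → ∀ h ∈ G.Info i j,
    G.YInfo i j β * μ i j h = G.Yh i β h

/-- The expected payoff of player `i` in the subgame rooted at `r` (payoffs of terminal
histories extending `r`, weighted by the move probabilities within the subgame). -/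
def uExpFrom (i : Fin G.n) (β : G.Profile) (r : List ℕ) : ℝ :=
  ∑ h ∈ G.Zset.filter (fun h => r <+: h), G.u i h * G.prodAlong β r (h.drop r.length)

/-- `β` is a subgame perfect equilibrium in behavioral strategies: its restriction to every
subgame is a Nash equilibrium in behavioral strategies of that subgame. -/
def IsSubgamePerfect (β : G.Profile) : Prop :=
  G.IsBehProfile β ∧ ∀ r : List ℕ, G.IsSubgameRoot r →
    ∀ (i : Fin G.n) (b : ℕ → ℕ → ℝ), G.IsBehStrategy i b →
      G.uExpFrom i (G.replace β i b) r ≤ G.uExpFrom i β r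

/-- `(β, β̃, μ)` satisfies the subgame perfect characterization (Definition 6 of the
paper). -/
def SubgameChar (β βt : G.Profile) (μ : G.Belief) : Prop :=
  (∀ (i : Fin G.n) (j : ℕ), j < G.m i → ∀ a' ∈ G.infoA i j, ∀ a'' ∈ G.infoA i j,
    G.uDiamondAct i j a' (G.rho i j β βt) < G.uDiamondAct i j a'' (G.rho i j β βt) →
    β i j a' = 0) ∧
  (∀ (i : Fin G.n) (j : ℕ), j < G.m i → ∀ a' ∈ G.infoA i j, ∀ a'' ∈ G.infoA i j,
    G.uCond i j a' (G.rho i j β βt) μ < G.uCond i j a'' (G.rho i j β βt) μ →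
    βt i j a' = 0) ∧
  G.IsBelief μ ∧ G.YConsistent β μ

/-- `(β, μ)` is a semi-sequential equilibrium. -/
def SemiSeqEq (β : G.Profile) (μ : G.Belief) : Prop :=
  G.IsBehProfile β ∧ G.IsBelief μ ∧ G.SelfIndep β μ ∧
  ∀ (i : Fin G.n) (j : ℕ), j < G.m i → ∀ a' ∈ G.infoA i j, ∀ a'' ∈ G.infoA i j,
    G.uCond i j a' β μ < G.uCond i j a'' β μ → β i j a' = 0

/-- `(β, μ)` is a subgame perfect semi-sequential equilibrium. -/
def SubgameSemiSeqEq (β : G.Profile) (μ : G.Belief) : Prop :=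
  G.IsBehProfile β ∧ G.IsBelief μ ∧ G.YConsistent β μ ∧
  ∀ (i : Fin G.n) (j : ℕ), j < G.m i → ∀ a' ∈ G.infoA i j, ∀ a'' ∈ G.infoA i j,
    G.uCond i j a' β μ < G.uCond i j a'' β μ → β i j a' = 0

/-- `d(I_i^j)`: the number of information sets of player `i` containing a prefix of some
history of `I_i^j` (counting `I_i^j` itself). -/
def dInfo (i : Fin G.n) (j : ℕ) : ℕ :=
  ((Finset.range (G.m i)).filter
    (fun q => ∃ h ∈ G.Info i j, ∃ p : List ℕ, p <+: h ∧ p ∈ G.Info i q)).card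

end EFG

/-!
Scarf's combinatorial lemma, applied to grid points ranked by their barycentric coordinates,
yields Brouwer's theorem for a simplex, hence for a product of simplices, which is a retract of
a simplex. Consequently every continuous nonnegative family `g x k` on such a product has a
point where each `g x k` is proportional to the `k`-th coordinate of `x`.

Beliefs are treated as choices of additional agents, one for each information set. With
`g = S^i(h|β)` in the belief coordinates, proportionality is exactly self-independence, including
the case where all `S^i(h|β)` vanish. With `g` equal to Nash's gains in the strategy coordinates,
proportionality forces all gains to vanish, so only optimal actions are played.
-/

open Finset Function

section Scarf

variable {V I L : Type*} [LinearOrder L] {r : I → V → L} {σ τ : Finset V} {x z : V} {i j k : I}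

/-- Scarf's dominance condition: `σ` dominates for the rankings `r` if no point of `V` beats
all of `σ` in every ranking, i.e. every point of `V` lies weakly below all of `σ` in at least
one ranking. -/
def Dominates (r : I → V → L) (σ : Finset V) : Prop :=
  ∀ y, ∃ i, IsMinOn (r i) σ y

/-- The points which can complete `τ` to a dominating set by becoming its minimum in the
ranking `k` only. -/
def candidates (r : I → V → L) (τ : Finset V) (k : I) : Set V :=
  {x | ∀ l ≠ k, ¬ IsMinOn (r l) τ x}

lemma Dominates.anti (hσ : Dominates r σ) (h : τ ⊆ σ) : Dominates r τ := fun y ↦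
  (hσ y).imp fun _ hy ↦ hy.on_subset (coe_subset.2 h)

lemma isMinOn_insert {f : V → L} {y : V} :
    IsMinOn f (insert x τ : Finset V) y ↔ f y ≤ f x ∧ IsMinOn f τ y := by
  simp [isMinOn_iff]

lemma eq_of_isMinOn {f : V → L} (hf : Injective f) (hx : x ∈ σ) (hz : z ∈ σ)
    (hxmin : IsMinOn f σ x) (hzmin : IsMinOn f σ z) : x = z :=
  hf <| le_antisymm (hxmin hz) (hzmin hx)

lemma exists_common_min [Fintype I] (r : I → V → L) (hτ : τ.Nonempty)
    (hcard : #τ < Fintype.card I) :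
    ∃ z ∈ τ, ∃ i j, i ≠ j ∧ IsMinOn (r i) τ z ∧ IsMinOn (r j) τ z := by
  choose m hm hmin using fun i ↦ exists_min_image τ (r i) hτ
  obtain ⟨i, -, j, -, hij, hmij⟩ :=
    exists_ne_map_eq_of_card_lt_of_maps_to (s := univ) hcard fun i _ ↦ hm i
  exact ⟨m i, hm i, i, j, hij, hmin i, hmij ▸ hmin j⟩

/-- A dominating set with as many points as there are rankings is in bijection with them,
each point being the minimum for its own ranking. -/
lemma Dominates.index_unique [Fintype I] (hr : ∀ i, Injective (r i)) (hσ : Dominates r σ)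
    (hcard : #σ = Fintype.card I) (hz : z ∈ σ) (hi : IsMinOn (r i) σ z)
    (hj : IsMinOn (r j) σ z) : i = j := by
  choose φ hφ using hσ
  have hinj : Set.InjOn φ σ := fun x hx y hy hxy ↦
    eq_of_isMinOn (hr (φ x)) hx hy (hφ x) (hxy ▸ hφ y)
  have hsurj : σ.image φ = univ :=
    eq_univ_of_card _ <| (card_image_of_injOn hinj).trans hcard
  have key : ∀ k, IsMinOn (r k) σ z → φ z = k := fun k hk ↦ by
    obtain ⟨x, hx, rfl⟩ := mem_image.1 (hsurj ▸ mem_univ k)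
    rw [eq_of_isMinOn (hr _) hz hx hk (hφ x)]
  exact (key i hi).symm.trans (key j hj)

lemma dominates_insert_iff (hτ : Dominates r τ) (hx : x ∈ candidates r τ k) :
    Dominates r (insert x τ) ↔ IsMaxOn (r k) (candidates r τ k) x := by
  refine ⟨fun h y hy ↦ ?_, fun h y ↦ ?_⟩
  · obtain ⟨l, hl⟩ := h y
    obtain ⟨hyx, hyτ⟩ := isMinOn_insert.1 hl
    obtain rfl : l = k := of_not_not fun hlk ↦ hy l hlk hyτ
    exact hyx
  · by_cases hy : y ∈ candidates r τ k
    · obtain ⟨l, hl⟩ := hτ y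
      obtain rfl : l = k := of_not_not fun hlk ↦ hy l hlk hl
      exact ⟨l, isMinOn_insert.2 ⟨h hy, hl⟩⟩
    · obtain ⟨l, hlk, hl⟩ : ∃ l ≠ k, IsMinOn (r l) τ y := by simpa [candidates] using hy
      exact ⟨l, isMinOn_insert.2 ⟨le_of_not_gt fun hxy ↦ hx l hlk fun w hw ↦
        hxy.le.trans (hl hw), hl⟩⟩

lemma Dominates.existsUnique_insert [Finite V] (hr : ∀ i, Injective (r i)) (hτ : Dominates r τ)
    (hne : (candidates r τ k).Nonempty) :
    ∃! x, x ∈ candidates r τ k ∧ Dominates r (insert x τ) := by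
  obtain ⟨x, hx, hmax⟩ := Set.exists_max_image _ (r k) (Set.toFinite _) hne
  refine ⟨x, ⟨hx, (dominates_insert_iff hτ hx).2 hmax⟩, fun y ⟨hy, hyτ⟩ ↦ hr k ?_⟩
  exact le_antisymm (hmax y hy) ((dominates_insert_iff hτ hy).1 hyτ hx)

section Facet

variable [Fintype I]

lemma mem_candidates_of_isMinOn (hr : ∀ i, Injective (r i)) (hcard : #τ + 1 = Fintype.card I)
    (hxτ : x ∉ τ) (hσ : Dominates r (insert x τ)) (hx : IsMinOn (r i) τ x) :
    x ∈ candidates r τ i := fun _ hli hl ↦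
  hli <| hσ.index_unique hr (by rwa [card_insert_of_notMem hxτ]) (mem_insert_self x τ)
    (isMinOn_insert.2 ⟨le_rfl, hl⟩) (isMinOn_insert.2 ⟨le_rfl, hx⟩)

lemma mem_candidates_or_mem_candidates (hr : ∀ i, Injective (r i))
    (hcard : #τ + 1 = Fintype.card I) (hz : z ∈ τ) (hij : i ≠ j) (hi : IsMinOn (r i) τ z)
    (hj : IsMinOn (r j) τ z) (hxτ : x ∉ τ) (hσ : Dominates r (insert x τ)) :
    x ∈ candidates r τ i ∨ x ∈ candidates r τ j := by
  have hlt : r i x < r i z ∨ r j x < r j z := by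
    by_contra! h
    exact hij <| hσ.index_unique hr (by rwa [card_insert_of_notMem hxτ])
      (mem_insert_of_mem hz) (isMinOn_insert.2 ⟨h.1, hi⟩) (isMinOn_insert.2 ⟨h.2, hj⟩)
  exact hlt.imp
    (fun h ↦ mem_candidates_of_isMinOn hr hcard hxτ hσ fun w hw ↦ h.le.trans (hi hw))
    (fun h ↦ mem_candidates_of_isMinOn hr hcard hxτ hσ fun w hw ↦ h.le.trans (hj hw))

end Facet

lemma notMem_of_mem_candidates (hr : ∀ i, Injective (r i)) (hτ : Dominates r τ)
    (hz : z ∈ τ) (hij : i ≠ j) (hi : IsMinOn (r i) τ z) (hj : IsMinOn (r j) τ z)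
    (hx : x ∈ candidates r τ i) : x ∉ τ := fun hxτ ↦ by
  obtain ⟨l, hl⟩ := hτ x
  obtain rfl : l = i := of_not_not fun hli ↦ hx l hli hl
  obtain rfl : x = z := eq_of_isMinOn (hr l) hxτ hz hl hi
  exact hx j hij.symm hj

lemma Dominates.disjoint_candidates (hτ : Dominates r τ) (hij : i ≠ j) :
    Disjoint (candidates r τ i) (candidates r τ j) := by
  refine Set.disjoint_left.2 fun x hxi hxj ↦ ?_
  obtain ⟨l, hl⟩ := hτ x
  obtain rfl : l = i := of_not_not fun hli ↦ hxi l hli hl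
  exact hxj l hij hl

theorem Dominates.card_dominating_covers [Fintype I] [Fintype V] (hr : ∀ i, Injective (r i))
    (hτ : Dominates r τ) (hcard : #τ + 1 = Fintype.card I) (hne : τ.Nonempty)
    (hcand : ∀ k, (candidates r τ k).Nonempty) :
    #{σ | τ ⋖ σ ∧ Dominates r σ} = 2 := by
  obtain ⟨z, hz, i, j, hij, hi, hj⟩ := exists_common_min r hne (by lia)
  obtain ⟨xi, ⟨hxi, hdi⟩, hui⟩ := hτ.existsUnique_insert hr (hcand i)
  obtain ⟨xj, ⟨hxj, hdj⟩, huj⟩ := hτ.existsUnique_insert hr (hcand j)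
  have hxiτ : xi ∉ τ := notMem_of_mem_candidates hr hτ hz hij hi hj hxi
  have hxjτ : xj ∉ τ := notMem_of_mem_candidates hr hτ hz hij.symm hj hi hxj
  have hne : insert xi τ ≠ insert xj τ := fun h ↦
    (hτ.disjoint_candidates hij).ne_of_mem hxi hxj <|
      (insert_inj hxiτ).1 h
  suffices h : ({σ | τ ⋖ σ ∧ Dominates r σ} : Finset (Finset V)) =
      {insert xi τ, insert xj τ} by rw [h, card_pair hne]
  ext σ
  simp only [mem_filter_univ, mem_insert, mem_singleton]
  constructor
  · rintro ⟨hσ, hdσ⟩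
    obtain ⟨x, hxτ, rfl⟩ := covBy_iff_exists_insert.1 hσ
    rcases mem_candidates_or_mem_candidates hr hcard hz hij hi hj hxτ hdσ with hx | hx
    · exact .inl (by rw [hui x ⟨hx, hdσ⟩])
    · exact .inr (by rw [huj x ⟨hx, hdσ⟩])
  · rintro (rfl | rfl)
    exacts [⟨covBy_insert hxiτ, hdi⟩, ⟨covBy_insert hxjτ, hdj⟩]

/-- `b i` plays the role of the facet of a simplex opposite to the vertex `i`: it is last in
the ranking `i`, and it precedes all points outside the family `b` in the other rankings. -/
structure IsSlack (r : I → V → L) (b : I → V) : Prop where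
  le : ∀ i x, r i (b i) ≤ r i x
  lt : ∀ i j x, j ≠ i → x ∉ Set.range b → r i x < r i (b j)

section Slack

variable [Fintype I] {b : I → V}

/-- The slack points other than `b i`: the boundary facet at which the parity argument starts. -/
def slackFacet (b : I → V) (i : I) : Finset V := (univ.erase i).image b

lemma IsSlack.dominates_slackFacet (hb : IsSlack r b) (i : I) :
    Dominates r (slackFacet b i) := fun y ↦ by
  by_cases hy : y ∈ Set.range b
  · obtain ⟨j, rfl⟩ := hy
    exact ⟨j, fun x _ ↦ hb.le j x⟩
  · refine ⟨i, fun x hx ↦ ?_⟩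
    obtain ⟨j, hj, rfl⟩ := mem_image.1 hx
    exact (hb.lt i j y (ne_of_mem_erase hj) hy).le

lemma mem_slackFacet (hij : j ≠ i) : b j ∈ slackFacet b i :=
  mem_image_of_mem b (mem_erase.2 ⟨hij, mem_univ j⟩)

lemma card_slackFacet (hb : Injective b) (i : I) : #(slackFacet b i) + 1 = Fintype.card I := by
  rw [slackFacet, card_image_of_injective _ hb, card_erase_add_one (mem_univ i), card_univ]

lemma IsSlack.eq_of_isMinOn_slackFacet (hr : ∀ i, Injective (r i)) (hb : IsSlack r b)
    (hij : j ≠ i) (hx : IsMinOn (r j) (slackFacet b i) x) : x = b j :=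
  hr j <| le_antisymm (hx (mem_slackFacet hij)) (hb.le j x)

theorem IsSlack.card_dominating_covers_slackFacet [Fintype V] (hr : ∀ i, Injective (r i))
    (hb : IsSlack r b) (hinj : Injective b) (hx : x ∉ Set.range b) (i : I) :
    #{σ | slackFacet b i ⋖ σ ∧ Dominates r σ} = 1 := by
  have hcand : x ∈ candidates r (slackFacet b i) i := fun l hl hmin ↦
    hx ⟨l, (hb.eq_of_isMinOn_slackFacet hr hl hmin).symm⟩
  obtain ⟨y, ⟨hy, hdy⟩, huniq⟩ := (hb.dominates_slackFacet i).existsUnique_insert hr ⟨x, hcand⟩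
  have hyb : y ∉ slackFacet b i := fun h ↦ by
    obtain ⟨j, hj, rfl⟩ := mem_image.1 h
    exact hy j (ne_of_mem_erase hj) fun w _ ↦ hb.le j w
  refine card_eq_one.2 ⟨insert y (slackFacet b i), ?_⟩
  ext σ
  simp only [mem_filter_univ, mem_singleton]
  refine ⟨fun ⟨hσ, hdσ⟩ ↦ ?_, fun h ↦ h ▸ ⟨covBy_insert hyb, hdy⟩⟩
  obtain ⟨w, hw, rfl⟩ := covBy_iff_exists_insert.1 hσ
  obtain ⟨l, hl⟩ := hdσ w
  have hlτ := (isMinOn_insert.1 hl).2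
  obtain rfl : l = i := of_not_not fun hli ↦
    hw (hb.eq_of_isMinOn_slackFacet hr hli hlτ ▸ mem_slackFacet hli)
  rw [huniq w ⟨mem_candidates_of_isMinOn hr (card_slackFacet hinj l) hw hdσ hlτ, hdσ⟩]

lemma IsSlack.mem_candidates {c : V → I} (hb : IsSlack r b) (hc : LeftInverse c b)
    (hτc : τ.image c = univ.erase i) (hτ : τ ≠ slackFacet b i) (k : I) :
    b k ∈ candidates r τ k := fun l hlk hmin ↦ hτ <| by
  have hrange : ∀ x ∈ τ, b (c x) = x := fun x hx ↦ by
    obtain ⟨m, rfl⟩ : x ∈ Set.range b := of_not_not fun hxb ↦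
      (hmin hx).not_gt (hb.lt l k x hlk.symm hxb)
    rw [hc]
  rw [slackFacet, ← hτc, image_image, image_congr (f := b ∘ c) (g := id) hrange, image_id]

theorem IsSlack.card_dominating_covers [Fintype V] {c : V → I} (hr : ∀ i, Injective (r i))
    (hb : IsSlack r b) (hc : LeftInverse c b) (hdτ : Dominates r τ)
    (hcard : #τ + 1 = Fintype.card I) (hτc : τ.image c = univ.erase i)
    (hτ : τ ≠ slackFacet b i) : #{σ | τ ⋖ σ ∧ Dominates r σ} = 2 := by
  refine hdτ.card_dominating_covers hr hcard (nonempty_iff_ne_empty.2 fun h ↦ hτ ?_)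
    fun k ↦ ⟨b k, hb.mem_candidates hc hτc hτ k⟩
  rw [slackFacet, ← hτc, h, image_empty, image_empty]

end Slack

section Colouring

variable {c : V → I}

lemma image_erase_eq_image_iff (hx : x ∈ σ) :
    (σ.erase x).image c = σ.image c ↔ ∃ y ∈ σ.erase x, c y = c x := by
  conv_lhs => rw [← insert_erase hx, image_insert, erase_insert (notMem_erase x σ), eq_comm,
    insert_eq_self]
  exact mem_image

lemma eq_or_eq_of_image_erase_eq {x' y : V} (hinj : Set.InjOn c (σ.erase x))
    (hx' : x' ∈ σ.erase x) (hcx' : c x' = c x) (hy : y ∈ σ)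
    (himg : (σ.erase y).image c = σ.image c) : y = x ∨ y = x' := by
  obtain ⟨w, hw, hcw⟩ := (image_erase_eq_image_iff hy).1 himg
  refine or_iff_not_imp_left.2 fun hyx ↦ hinj (mem_erase.2 ⟨hyx, hy⟩) hx' ?_
  by_cases hwx : w = x
  · rw [← hcw, hwx, hcx']
  · exact absurd (hinj (mem_erase.2 ⟨hwx, mem_of_mem_erase hw⟩) (mem_erase.2 ⟨hyx, hy⟩) hcw)
      (ne_of_mem_erase hw)

lemma image_eq_erase_of_image_erase_eq [Fintype I] (hx : x ∈ σ) (hσ : σ.image c ≠ univ)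
    (himg : (σ.erase x).image c = univ.erase i) : σ.image c = univ.erase i := by
  have himgσ : σ.image c = insert (c x) (univ.erase i) := by
    rw [← himg, ← image_insert, insert_erase hx]
  have hcx : c x ≠ i := fun h ↦ hσ <| by rw [himgσ, h, insert_erase (mem_univ i)]
  rw [himgσ, insert_eq_self]
  exact mem_erase.2 ⟨hcx, mem_univ _⟩

lemma even_card_facets_image_eq_erase [Fintype V] [Fintype I] (hcard : #σ = Fintype.card I)
    (hσ : σ.image c ≠ univ) (i : I) :
    Even #{τ | τ ⋖ σ ∧ τ.image c = univ.erase i} := by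
  obtain hempty | ⟨τ₀, hτ₀⟩ :=
    ({τ | τ ⋖ σ ∧ τ.image c = univ.erase i} : Finset (Finset V)).eq_empty_or_nonempty
  · rw [hempty, card_empty]
    exact Even.zero
  obtain ⟨hτσ, himg⟩ := mem_filter_univ _ |>.1 hτ₀
  obtain ⟨x, hx, rfl⟩ := covBy_iff_exists_erase.1 hτσ
  have himgσ : σ.image c = univ.erase i := image_eq_erase_of_image_erase_eq hx hσ himg
  obtain ⟨x', hx', hcx'⟩ := (image_erase_eq_image_iff hx).1 (himg.trans himgσ.symm)
  have hinj : Set.InjOn c (σ.erase x) := card_image_iff.1 <| by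
    rw [himg, card_erase_of_mem (mem_univ i), card_erase_of_mem hx, hcard, card_univ]
  have hx'σ : x' ∈ σ := mem_of_mem_erase hx'
  suffices h : ({τ | τ ⋖ σ ∧ τ.image c = univ.erase i} : Finset (Finset V)) =
      {σ.erase x, σ.erase x'} by
    rw [h, card_pair fun h ↦ ne_of_mem_erase hx' (erase_injOn σ hx hx'σ h).symm]
    exact even_two
  ext τ
  simp only [mem_filter_univ, mem_insert, mem_singleton]
  constructor
  · rintro ⟨hτσ, hτ⟩
    obtain ⟨y, hy, rfl⟩ := covBy_iff_exists_erase.1 hτσ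
    exact (eq_or_eq_of_image_erase_eq hinj hx' hcx' hy (hτ.trans himgσ.symm)).imp
      (congrArg _) (congrArg _)
  · rintro (rfl | rfl)
    · exact ⟨hτσ, himg⟩
    · refine ⟨erase_covBy hx'σ, himgσ ▸ (image_erase_eq_image_iff hx'σ).2 ⟨x, ?_, hcx'.symm⟩⟩
      exact mem_erase.2 ⟨(ne_of_mem_erase hx').symm, hx⟩

end Colouring

lemma exists_odd_card_bipartiteBelow {α β : Type*} (R : α → β → Prop) {s : Finset α}
    {t : Finset β} {a : α} (ha : a ∈ s) (hodd : Odd #(bipartiteAbove R t a))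
    (heven : ∀ a' ∈ s, a' ≠ a → Even #(bipartiteAbove R t a')) :
    ∃ b ∈ t, Odd #(bipartiteBelow R s b) := by
  by_contra! h
  have hsum : Odd (∑ a ∈ s, #(bipartiteAbove R t a)) := by
    rw [← add_sum_erase _ _ ha]
    exact hodd.add_even <| even_sum _ fun a' ha' ↦
      heven a' (mem_of_mem_erase ha') (ne_of_mem_erase ha')
  refine Nat.not_even_iff_odd.2 hsum ?_
  rw [sum_card_bipartiteAbove_eq_sum_card_bipartiteBelow]
  exact even_sum _ fun b hb ↦ Nat.not_odd_iff_even.1 (h b hb)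

lemma card_add_one_of_covBy (h : τ ⋖ σ) : #τ + 1 = #σ :=
  Nat.covBy_iff_add_one_eq.1 h.card_finset

theorem exists_dominates_image_eq_univ [Finite V] [Fintype I] [Nonempty I] {b : I → V}
    {c : V → I} (hr : ∀ i, Injective (r i)) (hb : IsSlack r b) (hc : LeftInverse c b)
    (hx : x ∉ Set.range b) : ∃ σ, Dominates r σ ∧ σ.image c = univ := by
  have := Fintype.ofFinite V
  let i := Classical.arbitrary I
  let facets : Finset (Finset V) :=
    {τ | Dominates r τ ∧ #τ + 1 = Fintype.card I ∧ τ.image c = univ.erase i}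
  let rooms : Finset (Finset V) := {σ | Dominates r σ ∧ #σ = Fintype.card I}
  have hslack : slackFacet b i ∈ facets := (mem_filter_univ _).2
    ⟨hb.dominates_slackFacet i, card_slackFacet hc.injective i, by
      rw [slackFacet, image_image, hc.comp_eq_id, image_id]⟩
  have habove : ∀ τ ∈ facets, bipartiteAbove (· ⋖ ·) rooms τ =
      ({σ | τ ⋖ σ ∧ Dominates r σ} : Finset (Finset V)) := by
    intro τ hτ
    ext σ
    have hcard := ((mem_filter_univ _).1 hτ).2.1
    simp only [mem_bipartiteAbove, rooms, mem_filter_univ]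
    exact ⟨fun h ↦ ⟨h.2, h.1.1⟩,
      fun h ↦ ⟨⟨h.2, (card_add_one_of_covBy h.1).symm.trans hcard⟩, h.1⟩⟩
  have hbelow : ∀ σ ∈ rooms, bipartiteBelow (· ⋖ ·) facets σ =
      ({τ | τ ⋖ σ ∧ τ.image c = univ.erase i} : Finset (Finset V)) := by
    intro σ hσ
    ext τ
    obtain ⟨hdσ, hcard⟩ := (mem_filter_univ _).1 hσ
    simp only [mem_bipartiteBelow, facets, mem_filter_univ]
    exact ⟨fun h ↦ ⟨h.2, h.1.2.2⟩,
      fun h ↦ ⟨⟨hdσ.anti h.1.1.1, (card_add_one_of_covBy h.1).trans hcard, h.2⟩, h.1⟩⟩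
  obtain ⟨σ, hσ, hodd⟩ := exists_odd_card_bipartiteBelow (· ⋖ ·) (t := rooms) hslack
    (by
      rw [habove _ hslack, hb.card_dominating_covers_slackFacet hr hc.injective hx i]
      exact odd_one)
    fun τ hτ hne ↦ by
      obtain ⟨hdτ, hcard, hτc⟩ := (mem_filter_univ _).1 hτ
      rw [habove τ hτ, hb.card_dominating_covers hr hc hdτ hcard hτc hne]
      exact even_two
  obtain ⟨hdσ, hcard⟩ := (mem_filter_univ _).1 hσ
  refine ⟨σ, hdσ, of_not_not fun hσc ↦ Nat.not_even_iff_odd.2 hodd ?_⟩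
  rw [hbelow σ hσ]
  exact even_card_facets_image_eq_erase hcard hσc i

end Scarf

section Grid

variable {J : Type*} [Fintype J] {N : ℕ}

/-- The barycentric coordinates, scaled by `N`, of the points of the grid together with one
slack point for each `j : J`, which is placed below the grid in the coordinate `j` and above it
in the others. -/
def gridCoord (N : ℕ) : piAntidiag (univ : Finset J) N ⊕ J → J → ℤ :=
  Sum.elim (fun x i ↦ x.1 i) fun j i ↦ if i = j then -1 else N + 1

/-- The ranking of grid and slack points by their `i`-th coordinate, with ties broken by an
arbitrary enumeration. -/
def gridRank (N : ℕ) (i : J) (v : piAntidiag (univ : Finset J) N ⊕ J) :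
    ℤ ×ₗ Fin (Fintype.card (piAntidiag (univ : Finset J) N ⊕ J)) :=
  toLex (gridCoord N v i, Fintype.equivFin _ v)

lemma gridRank_injective (i : J) : Injective (gridRank N i) := fun _ _ h ↦
  (Fintype.equivFin _).injective (Prod.ext_iff.1 (toLex.injective h)).2

lemma gridCoord_le_of_gridRank_le {i : J} {v w : piAntidiag (univ : Finset J) N ⊕ J}
    (h : gridRank N i v ≤ gridRank N i w) : gridCoord N v i ≤ gridCoord N w i :=
  Prod.Lex.monotone_fst _ _ h

lemma gridRank_lt_of_gridCoord_lt {i : J} {v w : piAntidiag (univ : Finset J) N ⊕ J}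
    (h : gridCoord N v i < gridCoord N w i) : gridRank N i v < gridRank N i w :=
  lt_of_not_ge fun hle ↦ (gridCoord_le_of_gridRank_le hle).not_gt h

lemma sum_gridCoord_inl (x : piAntidiag (univ : Finset J) N) :
    ∑ i, gridCoord N (.inl x) i = N := by
  simpa only [Nat.cast_sum] using! congrArg (Nat.cast (R := ℤ)) (mem_piAntidiag.1 x.2).1

lemma neg_one_le_gridCoord (v : piAntidiag (univ : Finset J) N ⊕ J) (i : J) :
    -1 ≤ gridCoord N v i := by
  rcases v with x | j
  · exact (by norm_num : (-1 : ℤ) ≤ 0).trans (Int.natCast_nonneg (x.1 i))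
  · simp only [gridCoord, Sum.elim_inr]
    split_ifs <;> lia

lemma isSlack_gridRank (N : ℕ) : IsSlack (gridRank (J := J) N) Sum.inr where
  le i v := by
    by_cases hv : v = .inr i
    · rw [hv]
    refine (gridRank_lt_of_gridCoord_lt ?_).le
    rcases v with x | j
    · simp only [gridCoord, Sum.elim_inl, Sum.elim_inr, if_true]
      lia
    · have hij : i ≠ j := fun h ↦ hv (h ▸ rfl)
      simp only [gridCoord, Sum.elim_inr, if_true, if_neg hij]
      lia
  lt i j v hij hv := by
    obtain ⟨x, rfl⟩ : ∃ x, v = .inl x := by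
      rcases v with x | j
      exacts [⟨x, rfl⟩, absurd ⟨j, rfl⟩ hv]
    refine gridRank_lt_of_gridCoord_lt ?_
    have hxi : gridCoord N (.inl x) i ≤ N := sum_gridCoord_inl x ▸
      single_le_sum (fun k _ ↦ Int.natCast_nonneg (x.1 k)) (mem_univ i)
    have hbi : gridCoord N (.inr j) i = N + 1 := if_neg hij.symm
    lia

/-- If `∑ i, (a i + 1) ≤ N`, then some grid point beats the corner `a` in every coordinate. -/
lemma lt_sum_add_one_of_dominates [Nonempty J] {σ : Finset (piAntidiag (univ : Finset J) N ⊕ J)}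
    (hσ : Dominates (gridRank N) σ) {a : J → ℤ} (ha : ∀ i, -1 ≤ a i)
    (haσ : ∀ i, ∃ v ∈ σ, gridCoord N v i = a i) : N < ∑ i, (a i + 1) := by
  by_contra! hle
  lift (fun i ↦ a i + 1) to J → ℕ using fun i ↦ by have := ha i; lia with a' ha'
  have hle' : ∑ i, a' i ≤ N := by exact_mod_cast hle
  let y : J → ℕ := a' + Pi.single (Classical.arbitrary J) (N - ∑ i, a' i)
  have hy : y ∈ piAntidiag univ N := by
    simp [y, mem_piAntidiag, sum_add_distrib, hle']
  obtain ⟨i, hi⟩ := hσ (.inl ⟨y, hy⟩)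
  obtain ⟨v, hv, hva⟩ := haσ i
  have hyi : (y i : ℤ) ≤ a i := hva ▸ gridCoord_le_of_gridRank_le (hi hv)
  have hay : a' i ≤ y i := Nat.le_add_right _ _
  have := congrFun ha' i
  lia

lemma gridCoord_lt_add_card {x : piAntidiag (univ : Finset J) N} {a : J → ℤ}
    (ha : N < ∑ i, (a i + 1)) (hax : ∀ i, a i ≤ gridCoord N (.inl x) i) (i : J) :
    gridCoord N (.inl x) i < a i + Fintype.card J := by
  have hsum : ∑ i, (gridCoord N (.inl x) i - a i) < Fintype.card J := by
    have hcard : ∑ i, (a i + 1) = ∑ i, a i + Fintype.card J := by simp [sum_add_distrib]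
    rw [sum_sub_distrib, sum_gridCoord_inl]
    lia
  have hi := single_le_sum (f := fun i ↦ gridCoord N (.inl x) i - a i)
    (fun i _ ↦ sub_nonneg.2 (hax i)) (mem_univ i)
  lia

theorem exists_small_fully_coloured [Nonempty J] (c : piAntidiag (univ : Finset J) N → J) :
    ∃ s : Finset (piAntidiag (univ : Finset J) N), s.Nonempty ∧
      (∀ x ∈ s, ∀ y ∈ s, ∀ i, x.1 i ≤ y.1 i + Fintype.card J) ∧
      ∀ i, (∃ x ∈ s, c x = i) ∨ ∀ x ∈ s, x.1 i ≤ Fintype.card J := by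
  let x₀ : piAntidiag (univ : Finset J) N :=
    ⟨Pi.single (Classical.arbitrary J) N, by simp [mem_piAntidiag]⟩
  obtain ⟨σ, hdσ, hσc⟩ := exists_dominates_image_eq_univ (c := Sum.elim c id)
    gridRank_injective (isSlack_gridRank N) (fun _ ↦ rfl) (x := .inl x₀) (by simp)
  have hcol (i : J) : ∃ v ∈ σ, Sum.elim c id v = i := mem_image.1 (hσc.symm ▸ mem_univ i)
  have hne : σ.Nonempty := (hcol (Classical.arbitrary J)).imp fun _ h ↦ h.1
  choose m hmσ hmin using fun i ↦ exists_min_image σ (gridCoord N · i) hne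
  have hN : N < ∑ i, (gridCoord N (m i) i + 1) := lt_sum_add_one_of_dominates hdσ
    (fun i ↦ neg_one_le_gridCoord (m i) i) fun i ↦ ⟨m i, hmσ i, rfl⟩
  have hwidth (x : piAntidiag (univ : Finset J) N) (hx : .inl x ∈ σ) (i : J) :
      (x.1 i : ℤ) < gridCoord N (m i) i + Fintype.card J :=
    gridCoord_lt_add_card hN (fun i ↦ hmin i _ hx) i
  have hslack (j : J) (hj : .inr j ∈ σ) : gridCoord N (m j) j ≤ -1 := by
    simpa [gridCoord] using hmin j _ hj
  refine ⟨σ.toLeft, ?_, fun x hx y hy i ↦ ?_, fun i ↦ ?_⟩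
  · refine nonempty_iff_ne_empty.2 fun hempty ↦ hN.not_ge <| (sum_nonpos fun i _ ↦ ?_).trans
      (Int.natCast_nonneg N)
    obtain ⟨x | j, hv, rfl⟩ := hcol i
    · exact absurd (mem_toLeft.2 hv) (hempty ▸ notMem_empty x)
    · have := hslack j hv
      simp only [Sum.elim_inr, id]
      lia
  · have := hwidth x (mem_toLeft.1 hx) i
    have : gridCoord N (m i) i ≤ y.1 i := hmin i _ (mem_toLeft.1 hy)
    lia
  · obtain ⟨x | j, hv, rfl⟩ := hcol i
    · exact .inl ⟨x, mem_toLeft.2 hv, rfl⟩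
    · refine .inr fun x hx ↦ ?_
      have := hwidth x (mem_toLeft.1 hx) j
      have := hslack j hv
      simp only [Sum.elim_inr, id]
      lia

end Grid

open Filter Topology

section FixedPointProperty

/-- A space has the fixed point property if each of its continuous self-maps has a fixed point. -/
def FixedPointProperty (X : Type*) [TopologicalSpace X] : Prop :=
  ∀ f : X → X, Continuous f → ∃ x, IsFixedPt f x

lemma FixedPointProperty.of_retract {X Y : Type*} [TopologicalSpace X] [TopologicalSpace Y]
    (hY : FixedPointProperty Y) {s : X → Y} {ρ : Y → X} (hs : Continuous s) (hρ : Continuous ρ)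
    (hρs : LeftInverse ρ s) : FixedPointProperty X := fun f hf ↦ by
  obtain ⟨y, hy⟩ := hY (s ∘ f ∘ ρ) (hs.comp (hf.comp hρ))
  exact ⟨ρ y, (hρs (f (ρ y))).symm.trans (congrArg ρ hy)⟩

lemma exists_forall_nonpos_of_approx {X ι : Type*} [PseudoMetricSpace X] [CompactSpace X]
    {h : ι → X → ℝ} (hcont : ∀ i, Continuous (h i))
    (happrox : ∀ ε > 0, ∃ z, ∀ i, ∃ w, dist z w ≤ ε ∧ h i w ≤ ε) : ∃ x, ∀ i, h i x ≤ 0 := by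
  let ε (n : ℕ) : ℝ := 1 / ((n : ℝ) + 1)
  have hε : Tendsto ε atTop (𝓝 0) := tendsto_one_div_add_atTop_nhds_zero_nat
  choose z w hdist hle using fun n : ℕ ↦ happrox (ε n) Nat.one_div_pos_of_nat
  obtain ⟨x, φ, hφ, hx⟩ := CompactSpace.tendsto_subseq z
  have hεφ : Tendsto (ε ∘ φ) atTop (𝓝 0) := hε.comp hφ.tendsto_atTop
  refine ⟨x, fun i ↦ le_of_tendsto_of_tendsto' (((hcont i).tendsto x).comp ?_) hεφ
    fun n ↦ hle (φ n) i⟩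
  exact hx.congr_dist <|
    squeeze_zero (fun _ ↦ dist_nonneg) (fun n ↦ hdist (φ n) i) hεφ

end FixedPointProperty

section Brouwer

variable {J : Type*} [Fintype J]

lemma continuous_stdSimplex_apply (i : J) : Continuous fun p : stdSimplex ℝ J ↦ p i :=
  (continuous_apply i).comp continuous_subtype_val

lemma stdSimplex_exists_le [Nonempty J] (p q : stdSimplex ℝ J) : ∃ i, p i ≤ q i := by
  by_contra! h
  have := sum_lt_sum_of_nonempty univ_nonempty fun i _ ↦ h i
  simp at this

lemma stdSimplex_eq_of_le {p q : stdSimplex ℝ J} (h : ∀ i, p i ≤ q i) : p = q :=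
  stdSimplex.ext <| funext fun i ↦ (sum_eq_sum_iff_of_le fun i _ ↦ h i).1
    ((stdSimplex.sum_eq_one p).trans (stdSimplex.sum_eq_one q).symm) i (mem_univ i)

/-- The point of the simplex with barycentric coordinates `x / N`. -/
def gridPoint {N : ℕ} (hN : 0 < N) (x : piAntidiag (univ : Finset J) N) : stdSimplex ℝ J :=
  ⟨fun i ↦ x.1 i / N, fun i ↦ by positivity, by
    rw [← sum_div, div_eq_one_iff_eq (by positivity)]
    exact_mod_cast (mem_piAntidiag.1 x.2).1⟩

lemma gridPoint_apply {N : ℕ} (hN : 0 < N) (x : piAntidiag (univ : Finset J) N) (i : J) :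
    gridPoint hN x i = x.1 i / N := rfl

lemma dist_gridPoint_le {N : ℕ} (hN : 0 < N) {x y : piAntidiag (univ : Finset J) N} {d : ℕ}
    (hxy : ∀ i, x.1 i ≤ y.1 i + d) (hyx : ∀ i, y.1 i ≤ x.1 i + d) :
    dist (gridPoint hN x) (gridPoint hN y) ≤ d / N := by
  refine (dist_pi_le_iff (by positivity)).2 fun i ↦ ?_
  change |(x.1 i / N - y.1 i / N : ℝ)| ≤ d / N
  have hx : (x.1 i : ℝ) ≤ y.1 i + d := by exact_mod_cast hxy i
  have hy : (y.1 i : ℝ) ≤ x.1 i + d := by exact_mod_cast hyx i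
  rw [← sub_div, abs_div, Nat.abs_cast]
  gcongr
  rw [abs_sub_le_iff]
  constructor <;> linarith

lemma exists_approx_fixedPt [Nonempty J] (f : stdSimplex ℝ J → stdSimplex ℝ J) {N : ℕ}
    (hN : 0 < N) : ∃ z, ∀ i, ∃ w, dist z w ≤ Fintype.card J / N ∧
      w i - f w i ≤ Fintype.card J / N := by
  choose c hc using fun x ↦ stdSimplex_exists_le (gridPoint hN x) (f (gridPoint hN x))
  obtain ⟨s, ⟨z, hz⟩, hsmall, hcol⟩ := exists_small_fully_coloured c
  refine ⟨gridPoint hN z, fun i ↦ ?_⟩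
  rcases hcol i with ⟨x, hx, rfl⟩ | hface
  · refine ⟨gridPoint hN x, dist_gridPoint_le hN (hsmall z hz x hx) (hsmall x hx z hz), ?_⟩
    exact (sub_nonpos.2 (hc x)).trans (by positivity)
  · refine ⟨gridPoint hN z, by rw [dist_self]; positivity, ?_⟩
    refine (sub_le_self _ (stdSimplex.zero_le _ i)).trans ?_
    rw [gridPoint_apply]
    gcongr
    exact hface z hz

theorem fixedPointProperty_stdSimplex (J : Type*) [Fintype J] [Nonempty J] :
    FixedPointProperty (stdSimplex ℝ J) := fun f hf ↦ by
  obtain ⟨x, hx⟩ := exists_forall_nonpos_of_approx (h := fun i p ↦ p i - f p i)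
    (fun i ↦ (continuous_stdSimplex_apply i).sub ((continuous_stdSimplex_apply i).comp hf)) <| by
      intro ε hε
      obtain ⟨N, hN⟩ := exists_nat_gt (Fintype.card J / ε)
      have hN0 : (0 : ℝ) < N := lt_of_le_of_lt (by positivity) hN
      obtain ⟨z, hz⟩ := exists_approx_fixedPt f (Nat.cast_pos.1 hN0)
      have hNε : Fintype.card J / N ≤ ε := (div_le_comm₀ hε hN0).1 hN.le
      exact ⟨z, fun i ↦ (hz i).imp fun w hw ↦ ⟨hw.1.trans hNε, hw.2.trans hNε⟩⟩
  exact ⟨x, (stdSimplex_eq_of_le fun i ↦ sub_nonpos.1 (hx i)).symm⟩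

end Brouwer

section Product

variable {J : Type*} [Fintype J] [Nonempty J]

/-- The retraction onto the simplex, extended to the nonnegative orthant: mass missing from the
total `1` is added uniformly, and any excess is scaled away. -/
def toSimplex (w : J → ℝ) (hw : ∀ i, 0 ≤ w i) : stdSimplex ℝ J :=
  ⟨fun i ↦ (w i + max 0 (1 - ∑ j, w j) / Fintype.card J) / max 1 (∑ j, w j),
    fun i ↦ by have := hw i; positivity, by
    rw [← sum_div, sum_add_distrib, sum_const, card_univ, nsmul_eq_mul,
      mul_div_cancel₀ _ (by simp), div_eq_one_iff_eq (by positivity)]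
    rcases le_total (∑ j, w j) 1 with h | h
    · rw [max_eq_right (by linarith), max_eq_left h]; ring
    · rw [max_eq_left (by linarith), max_eq_right h, add_zero]⟩

lemma toSimplex_eq_self (p : stdSimplex ℝ J) : toSimplex p (stdSimplex.zero_le p) = p := by
  refine stdSimplex.ext (funext fun i ↦ ?_)
  change (p i + max 0 (1 - ∑ j, p j) / Fintype.card J) / max 1 (∑ j, p j) = p i
  simp

lemma toSimplex_apply_of_one_le {w : J → ℝ} (hw : ∀ i, 0 ≤ w i) (hsum : 1 ≤ ∑ j, w j) (i : J) :
    toSimplex w hw i = w i / ∑ j, w j := by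
  change (w i + max 0 (1 - ∑ j, w j) / Fintype.card J) / max 1 (∑ j, w j) = _
  rw [max_eq_left (by linarith), max_eq_right hsum, zero_div, add_zero]

lemma continuous_toSimplex {X : Type*} [TopologicalSpace X] {w : X → J → ℝ}
    (hcont : ∀ i, Continuous fun x ↦ w x i) (hw : ∀ x i, 0 ≤ w x i) :
    Continuous fun x ↦ toSimplex (w x) (hw x) := by
  refine Continuous.subtype_mk (continuous_pi fun i ↦ ?_) _
  have hsum := continuous_finsetSum univ fun i _ ↦ hcont i
  exact ((hcont i).add ((continuous_const.max (continuous_const.sub hsum)).div_const _)).div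
    (continuous_const.max hsum) fun x ↦ by positivity

theorem fixedPointProperty_pi_stdSimplex {K : Type*} [Finite K] (A : K → Type*)
    [∀ k, Fintype (A k)] [∀ k, Nonempty (A k)] :
    FixedPointProperty (∀ k, stdSimplex ℝ (A k)) := by
  have := Fintype.ofFinite K
  rcases isEmpty_or_nonempty K with _ | _
  · exact fun f _ ↦ ⟨isEmptyElim, Subsingleton.elim _ _⟩
  have : Nonempty (Σ k, A k) := nonempty_sigma.2 ⟨Classical.arbitrary K, inferInstance⟩
  let s (x : ∀ k, stdSimplex ℝ (A k)) : stdSimplex ℝ (Σ k, A k) :=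
    ⟨fun ka ↦ x ka.1 ka.2 / Fintype.card K, fun ka ↦
      div_nonneg (stdSimplex.zero_le _ _) (by simp), by
      rw [← sum_div, Fintype.sum_sigma, sum_congr rfl fun k _ ↦ stdSimplex.sum_eq_one (x k)]
      simp⟩
  let ρ (z : stdSimplex ℝ (Σ k, A k)) (k : K) : stdSimplex ℝ (A k) :=
    toSimplex (fun a ↦ Fintype.card K * z ⟨k, a⟩) fun a ↦
      mul_nonneg (by simp) (stdSimplex.zero_le _ _)
  refine (fixedPointProperty_stdSimplex (Σ k, A k)).of_retract (s := s) (ρ := ρ) ?_ ?_ ?_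
  · refine Continuous.subtype_mk (continuous_pi fun ka ↦ ?_) _
    exact ((continuous_stdSimplex_apply ka.2).comp (continuous_apply ka.1)).div_const _
  · exact continuous_pi fun k ↦ continuous_toSimplex
      (fun a ↦ (continuous_stdSimplex_apply _).const_mul _) _
  · intro x
    funext k
    have hx : (fun a ↦ Fintype.card K * s x ⟨k, a⟩) = x k := funext fun a ↦
      mul_div_cancel₀ _ (by simp)
    simp only [ρ, hx, toSimplex_eq_self]

/-- At a fixed point of `x ↦ (x + g x) / (1 + ∑ g x)` the vector `g x` is proportional to `x`. -/
theorem exists_forall_sum_mul_eq {K : Type*} [Finite K] {A : K → Type*} [∀ k, Fintype (A k)]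
    [∀ k, Nonempty (A k)] {g : (∀ k, stdSimplex ℝ (A k)) → ∀ k, A k → ℝ}
    (hg : ∀ k a, Continuous fun x ↦ g x k a) (hg0 : ∀ x k a, 0 ≤ g x k a) :
    ∃ x, ∀ k a, (∑ b, g x k b) * x k a = g x k a := by
  obtain ⟨x, hx⟩ := fixedPointProperty_pi_stdSimplex A
    (fun x k ↦ toSimplex (fun a ↦ x k a + g x k a)
      fun a ↦ add_nonneg (stdSimplex.zero_le _ a) (hg0 x k a))
    (continuous_pi fun k ↦ continuous_toSimplex (fun a ↦
      ((continuous_stdSimplex_apply a).comp (continuous_apply k)).add (hg k a)) _)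
  refine ⟨x, fun k a ↦ ?_⟩
  have hsum : ∑ b, (x k b + g x k b) = 1 + ∑ b, g x k b := by
    rw [sum_add_distrib, stdSimplex.sum_eq_one]
  have hpos : 0 ≤ ∑ b, g x k b := sum_nonneg fun b _ ↦ hg0 x k b
  have hxa : (x k a + g x k a) / ∑ b, (x k b + g x k b) = x k a :=
    (toSimplex_apply_of_one_le _ (by linarith) a).symm.trans
      (DFunLike.congr_fun (congrFun hx k) a)
  rw [hsum, div_eq_iff (by positivity)] at hxa
  linarith

end Product

section Excess

variable {J : Type*} [Fintype J]

/-- Nash's gain function: how much the payoff of `a` exceeds the expected payoff under `p`. -/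
def excess (w : J → ℝ) (p : stdSimplex ℝ J) (a : J) : ℝ :=
  max 0 (w a - ∑ b, p b * w b)

lemma sum_mul_sub_sum_mul (w : J → ℝ) (p : stdSimplex ℝ J) :
    ∑ b, p b * (w b - ∑ c, p c * w c) = 0 := by
  simp_rw [mul_sub]
  rw [sum_sub_distrib, ← sum_mul, stdSimplex.sum_eq_one, one_mul, sub_self]

lemma excess_eq_zero_of_sum_mul_eq {w : J → ℝ} {p : stdSimplex ℝ J}
    (h : ∀ a, (∑ b, excess w p b) * p a = excess w p a) (a : J) : excess w p a = 0 := by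
  have hsq (b : J) : excess w p b * (w b - ∑ c, p c * w c) = excess w p b ^ 2 := by
    rw [sq, excess]
    rcases le_total (w b - ∑ c, p c * w c) 0 with hb | hb
    · rw [max_eq_left hb, zero_mul, zero_mul]
    · rw [max_eq_right hb]
  have hsum : ∑ b, excess w p b ^ 2 = 0 := calc
    ∑ b, excess w p b ^ 2 = ∑ b, (∑ c, excess w p c) * (p b * (w b - ∑ c, p c * w c)) :=
      sum_congr rfl fun b _ ↦ by rw [← hsq, ← mul_assoc, h]
    _ = 0 := by rw [← mul_sum, sum_mul_sub_sum_mul, mul_zero]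
  exact pow_eq_zero_iff two_ne_zero |>.1 <|
    (sum_eq_zero_iff_of_nonneg fun b _ ↦ sq_nonneg _).1 hsum a (mem_univ a)

lemma eq_zero_of_lt_of_sum_excess_mul_eq {w : J → ℝ} {p : stdSimplex ℝ J}
    (h : ∀ a, (∑ b, excess w p b) * p a = excess w p a) {a b : J} (hab : w a < w b) :
    p a = 0 := by
  have hle (c : J) : w c - ∑ d, p d * w d ≤ 0 :=
    max_eq_left_iff.1 (excess_eq_zero_of_sum_mul_eq h c)
  have ha : p a * (w a - ∑ d, p d * w d) = 0 := (sum_eq_zero_iff_of_nonpos fun c _ ↦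
    mul_nonpos_of_nonneg_of_nonpos (stdSimplex.zero_le p c) (hle c)).1
      (sum_mul_sub_sum_mul w p) a (mem_univ a)
  exact (mul_eq_zero.1 ha).resolve_right ((sub_lt_sub_right hab _).trans_le (hle b)).ne

end Excess

namespace EFG

variable (G : EFG)

section Continuity

lemma continuous_moveProb (h : List ℕ) (a : ℕ) :
    Continuous fun β : G.Profile ↦ G.moveProb β h a := by
  unfold moveProb
  cases G.P h
  · exact continuous_const
  · simp only [Option.elim_some]
    fun_prop

lemma continuous_prodAlong (pre rest : List ℕ) :
    Continuous fun β : G.Profile ↦ G.prodAlong β pre rest := by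
  induction rest generalizing pre with
  | nil => exact continuous_const
  | cons b rest ih => exact (G.continuous_moveProb pre b).mul (ih (pre ++ [b]))

lemma continuous_prodAlongNot (i : Fin G.n) (pre rest : List ℕ) :
    Continuous fun β : G.Profile ↦ G.prodAlongNot i β pre rest := by
  induction rest generalizing pre with
  | nil => exact continuous_const
  | cons b rest ih =>
    refine Continuous.mul ?_ (ih (pre ++ [b]))
    split_ifs
    exacts [continuous_const, G.continuous_moveProb pre b]

lemma continuous_Sh (i : Fin G.n) (h : List ℕ) : Continuous fun β : G.Profile ↦ G.Sh i β h :=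
  G.continuous_prodAlongNot i [] h

lemma continuous_nuAux (i : Fin G.n) (j : ℕ) (pre rest : List ℕ) :
    Continuous fun p : G.Profile × G.Belief ↦ G.nuAux i j p.1 (p.2 i j) pre rest := by
  induction rest generalizing pre with
  | nil => exact continuous_const
  | cons b rest ih =>
    simp only [nuAux]
    split_ifs
    · have := G.continuous_prodAlong (pre ++ [b]) rest
      fun_prop
    · exact ih (pre ++ [b])

lemma continuous_uCond (i : Fin G.n) (j a : ℕ) :
    Continuous fun p : G.Profile × G.Belief ↦ G.uCond i j a p.1 p.2 :=
  continuous_finsetSum _ fun h _ ↦ (G.continuous_nuAux i j [] h).const_mul _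

end Continuity

variable {G} in
lemma moveProb_nonneg {β : G.Profile} (hβ : ∀ i j a, 0 ≤ β i j a) (h : List ℕ) (a : ℕ) :
    0 ≤ G.moveProb β h a := by
  unfold moveProb
  cases G.P h with
  | none => exact G.fc_nonneg h a
  | some i => exact hβ i _ a

variable {G} in
lemma prodAlongNot_nonneg {β : G.Profile} (hβ : ∀ i j a, 0 ≤ β i j a) (i : Fin G.n)
    (pre rest : List ℕ) : 0 ≤ G.prodAlongNot i β pre rest := by
  induction rest generalizing pre with
  | nil => exact zero_le_one
  | cons b rest ih =>
    refine mul_nonneg ?_ (ih (pre ++ [b]))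
    split_ifs
    exacts [zero_le_one, moveProb_nonneg hβ pre b]

variable {G} in
lemma Sh_nonneg {β : G.Profile} (hβ : ∀ i j a, 0 ≤ β i j a) (i : Fin G.n) (h : List ℕ) :
    0 ≤ G.Sh i β h :=
  prodAlongNot_nonneg hβ i [] h

lemma infoA_nonempty {i : Fin G.n} {j : ℕ} (hj : j < G.m i) : (G.infoA i j).Nonempty := by
  obtain ⟨h, hh⟩ := G.info_nonempty i j hj
  obtain ⟨-, -, ⟨a, ha⟩, -⟩ := (G.info_spec i j h hj).1 hh
  exact ⟨a, mem_sup.2 ⟨h, hh, mem_filter.2 ⟨G.act_mem h a ha, ha⟩⟩⟩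

/-- The information sets of all players. -/
abbrev InfoSet : Type := Σ i : Fin G.n, Fin (G.m i)

/-- The supports of the distributions making up an assessment: a strategy at an information set
is a distribution on its actions (`Sum.inl`), a belief there one on its histories (`Sum.inr`). -/
def Choice : G.InfoSet ⊕ G.InfoSet → Type
  | .inl k => G.infoA k.1 k.2
  | .inr k => G.Info k.1 k.2

instance : ∀ s, Fintype (G.Choice s)
  | .inl k => inferInstanceAs (Fintype (G.infoA k.1 k.2))
  | .inr k => inferInstanceAs (Fintype (G.Info k.1 k.2))

instance : ∀ s, Nonempty (G.Choice s)
  | .inl k => (G.infoA_nonempty k.2.2).to_subtype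
  | .inr k => (G.info_nonempty k.1 k.2 k.2.2).to_subtype

/-- An assessment as a point of a product of simplices, a strategy and a belief for each
information set. -/
abbrev Assessment : Type := ∀ s, stdSimplex ℝ (G.Choice s)

namespace Assessment

variable {G} (x : G.Assessment)

/-- The profile of an assessment, extended by `0` off the information sets and their actions. -/
def profile : G.Profile := fun i j a ↦
  if h : ∃ _ : j < G.m i, a ∈ G.infoA i j then x (.inl ⟨i, j, h.1⟩) ⟨a, h.2⟩ else 0

/-- The beliefs of an assessment, extended by `0` off the information sets. -/
def belief : G.Belief := fun i j h ↦
  if hh : ∃ _ : j < G.m i, h ∈ G.Info i j then x (.inr ⟨i, j, hh.1⟩) ⟨h, hh.2⟩ else 0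

lemma profile_apply (k : G.InfoSet) (a : G.infoA k.1 k.2) :
    x.profile k.1 k.2 a = x (.inl k) a :=
  dif_pos ⟨k.2.2, a.2⟩

lemma belief_apply (k : G.InfoSet) (h : G.Info k.1 k.2) :
    x.belief k.1 k.2 h = x (.inr k) h :=
  dif_pos ⟨k.2.2, h.2⟩

lemma profile_nonneg (i : Fin G.n) (j a : ℕ) : 0 ≤ x.profile i j a := by
  unfold profile
  split_ifs
  exacts [stdSimplex.zero_le _ _, le_rfl]

lemma isBehProfile_profile : G.IsBehProfile x.profile := fun i j hj ↦ by
  refine ⟨fun a _ ↦ x.profile_nonneg i j a, ?_⟩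
  rw [← sum_coe_sort]
  exact (sum_congr rfl fun a _ ↦ x.profile_apply ⟨i, j, hj⟩ a).trans (stdSimplex.sum_eq_one _)

lemma isBelief_belief : G.IsBelief x.belief := fun i j hj ↦ by
  refine ⟨fun h hh ↦ ?_, ?_⟩
  · exact (x.belief_apply ⟨i, j, hj⟩ ⟨h, hh⟩).symm ▸ stdSimplex.zero_le _ _
  · rw [← sum_coe_sort]
    exact (sum_congr rfl fun h _ ↦ x.belief_apply ⟨i, j, hj⟩ h).trans (stdSimplex.sum_eq_one _)

lemma continuous_profile : Continuous (profile : G.Assessment → G.Profile) := by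
  refine continuous_pi fun i ↦ continuous_pi fun j ↦ continuous_pi fun a ↦ ?_
  unfold profile
  split_ifs
  exacts [(continuous_stdSimplex_apply _).comp (continuous_apply _), continuous_const]

lemma continuous_belief : Continuous (belief : G.Assessment → G.Belief) := by
  refine continuous_pi fun i ↦ continuous_pi fun j ↦ continuous_pi fun h ↦ ?_
  unfold belief
  split_ifs
  exacts [(continuous_stdSimplex_apply _).comp (continuous_apply _), continuous_const]

/-- The conditional expected payoffs of the actions at an information set. -/
def payoff (k : G.InfoSet) (a : G.infoA k.1 k.2) : ℝ :=
  G.uCond k.1 k.2 a x.profile x.belief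

/-- The vectors to which an equilibrium assessment must be proportional: the gains of the
actions for a strategy, the reaching probabilities of the histories for a belief. -/
def target : ∀ s, G.Choice s → ℝ
  | .inl k => excess (x.payoff k) (x (.inl k))
  | .inr k => fun h ↦ G.Sh k.1 x.profile h.1

lemma target_nonneg : ∀ s a, 0 ≤ x.target s a
  | .inl _, _ => le_max_left _ _
  | .inr k, h => Sh_nonneg x.profile_nonneg k.1 h.1

lemma continuous_payoff (k : G.InfoSet) (a : G.infoA k.1 k.2) :
    Continuous fun x : G.Assessment ↦ x.payoff k a :=
  (G.continuous_uCond k.1 k.2 a).comp (continuous_profile.prodMk continuous_belief)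

lemma continuous_target : ∀ s a, Continuous fun x : G.Assessment ↦ x.target s a
  | .inl k, a => continuous_const.max <| (continuous_payoff k a).sub <|
      continuous_finsetSum _ fun b _ ↦
        (((continuous_stdSimplex_apply b).comp (continuous_apply (Sum.inl k))).mul
          (continuous_payoff k b) :)
  | .inr k, h => (G.continuous_Sh k.1 h.1).comp continuous_profile

variable {x}

lemma selfIndep_of_sum_target_mul_eq
    (hx : ∀ s a, (∑ b, x.target s b) * x s a = x.target s a) :
    G.SelfIndep x.profile x.belief := fun i j hj h hh ↦ by
  let k : G.InfoSet := ⟨i, j, hj⟩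
  have hsum : G.SInfo i j x.profile = ∑ b, x.target (.inr k) b := (sum_coe_sort _ _).symm
  rw [hsum, x.belief_apply k ⟨h, hh⟩]
  exact hx (.inr k) ⟨h, hh⟩

lemma semiSeqEq_of_sum_target_mul_eq
    (hx : ∀ s a, (∑ b, x.target s b) * x s a = x.target s a) :
    G.SemiSeqEq x.profile x.belief := by
  refine ⟨x.isBehProfile_profile, x.isBelief_belief, selfIndep_of_sum_target_mul_eq hx,
    fun i j hj a ha b hb hab ↦ ?_⟩
  let k : G.InfoSet := ⟨i, j, hj⟩
  rw [x.profile_apply k ⟨a, ha⟩]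
  exact eq_zero_of_lt_of_sum_excess_mul_eq (w := x.payoff k) (hx (.inl k)) (b := ⟨b, hb⟩) hab

end Assessment

end EFG

theorem stmt13_general (G : EFG) : ∃ (β : G.Profile) (μ : G.Belief), G.SemiSeqEq β μ := by
  obtain ⟨x, hx⟩ := exists_forall_sum_mul_eq (g := EFG.Assessment.target (G := G))
    EFG.Assessment.continuous_target EFG.Assessment.target_nonneg
  exact ⟨_, _, EFG.Assessment.semiSeqEq_of_sum_target_mul_eq hx⟩

/-- Every finite extensive-form game with perfect recall possesses a semi-sequential
equilibrium. -/
theorem stmt13 (G : EFG) (hPR : G.PerfectRecall) :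
    ∃ (β : G.Profile) (μ : G.Belief), G.SemiSeqEq β μ :=
  stmt13_general G
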